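/- arXiv:2605.21358 — 2 statements merged into one kernel-verified Lean document; each statement's English description precedes it below -/
import Mathlib

section
/- Let β ∈ (0,1), let φ : ZMod 12 → ℝ satisfy 0 < φ_m < 1 for all m, let X : ZMod 12 → ℝ, and define Φ = ∏_{j=1}^{12} φ_j, A_m = (Σ_{s=0}^{11} β^s ∏_{j=1}^{s} φ_{m+j}) / (1 − β^{12} Φ), and D_m = Σ_{r=1}^{12} w_{m,r} X_{m+r} with w_{m,r} = β^r (∏_{j=1}^{r−1} φ_{m+j}) (1 − φ_{m+r}) / (1 − β^{12} Φ). Then for every ε ∈ ℝ, the unique function h : ZMod 12 → ℝ satisfying the Bellman system h_m = ε + β (φ_{m+1} h_{m+1} + (1 − φ_{m+1}) X_{m+1}) for all m is given by h_m = A_m ε + D_m; in particular, the 12-periodic solution of the homeowner Bellman equation is affine in the match quality ε with slope A_m and intercept D_m. -/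
open Finset

/-- `Φ = ∏_{j=1}^{12} φ_j`. -/
noncomputable def Phi (φ : ZMod 12 → ℝ) : ℝ := ∏ j : ZMod 12, φ j

/-- The slope `A_m = (Σ_{s=0}^{11} β^s ∏_{j=1}^{s} φ_{m+j}) / (1 − β^{12} Φ)`. -/
noncomputable def Aslope (β : ℝ) (φ : ZMod 12 → ℝ) (m : ZMod 12) : ℝ :=
  (∑ s ∈ Finset.range 12, β ^ s * ∏ j ∈ Finset.range s, φ (m + ((j : ZMod 12) + 1))) /
    (1 - β ^ 12 * Phi φ)

/-- The weights `w_{m,r} = β^r (∏_{j=1}^{r−1} φ_{m+j}) (1 − φ_{m+r}) / (1 − β^{12} Φ)`. -/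
noncomputable def wgt (β : ℝ) (φ : ZMod 12 → ℝ) (m : ZMod 12) (r : ℕ) : ℝ :=
  β ^ r * (∏ j ∈ Finset.range (r - 1), φ (m + ((j : ZMod 12) + 1))) *
    (1 - φ (m + (r : ZMod 12))) / (1 - β ^ 12 * Phi φ)

/-- The intercept `D_m = Σ_{r=1}^{12} w_{m,r} X_{m+r}`. -/
noncomputable def Dint (β : ℝ) (φ : ZMod 12 → ℝ) (X : ZMod 12 → ℝ) (m : ZMod 12) : ℝ :=
  ∑ r ∈ Finset.Icc 1 12, wgt β φ m r * X (m + (r : ZMod 12))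

/-- The survival product `∏_{j=1}^{s} φ_{m+j}`. -/
noncomputable def survival (φ : ZMod 12 → ℝ) (m : ZMod 12) (s : ℕ) : ℝ :=
  ∏ j ∈ Finset.range s, φ (m + ((j : ZMod 12) + 1))

lemma survival_succ' (φ : ZMod 12 → ℝ) (m : ZMod 12) (s : ℕ) :
    survival φ m (s + 1) = φ (m + 1) * survival φ (m + 1) s := by
  unfold survival
  rw [Finset.prod_range_succ', Nat.cast_zero, zero_add, mul_comm]
  congr 1
  refine Finset.prod_congr rfl fun j _ => congrArg φ ?_
  push_cast
  ring

lemma survival_twelve (φ : ZMod 12 → ℝ) (m : ZMod 12) : survival φ m 12 = Phi φ := by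
  unfold survival Phi
  refine Finset.prod_nbij' (fun j : ℕ => m + ((j : ZMod 12) + 1))
    (fun k => (k - m - 1).val) (fun _ _ => Finset.mem_univ _)
    (fun k _ => Finset.mem_range.mpr (ZMod.val_lt _)) (fun j hj => ?_) (fun k _ => ?_)
    fun _ _ => rfl
  · rw [show m + ((j : ZMod 12) + 1) - m - 1 = (j : ZMod 12) by ring]
    exact ZMod.val_cast_of_lt (Finset.mem_range.mp hj)
  · rw [ZMod.natCast_zmod_val]
    ring

lemma pow_mul_Phi_lt_one {β : ℝ} (hβ : 0 < β ∧ β < 1) {φ : ZMod 12 → ℝ}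
    (hφ : ∀ m, 0 < φ m ∧ φ m < 1) : β ^ 12 * Phi φ < 1 := by
  have hPhi : Phi φ ≤ 1 :=
    Finset.prod_le_one (fun m _ => (hφ m).1.le) fun m _ => (hφ m).2.le
  calc β ^ 12 * Phi φ ≤ β ^ 12 := mul_le_of_le_one_right (by have := hβ.1; positivity) hPhi
    _ < 1 := pow_lt_one₀ hβ.1.le hβ.2 (by norm_num)

/-- The value over one year of the monthly payoffs `g`, discounted by `β` and by survival. -/
noncomputable def yearValue (β : ℝ) (φ g : ZMod 12 → ℝ) (m : ZMod 12) : ℝ :=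
  ∑ s ∈ Finset.range 12, β ^ s * survival φ m s * g (m + (s : ZMod 12))

lemma yearValue_step (β : ℝ) (φ g : ZMod 12 → ℝ) (m : ZMod 12) :
    yearValue β φ g m =
      (1 - β ^ 12 * Phi φ) * g m + β * φ (m + 1) * yearValue β φ g (m + 1) := by
  have hshift : β * φ (m + 1) * yearValue β φ g (m + 1) =
      ∑ s ∈ Finset.range 12,
        β ^ (s + 1) * survival φ m (s + 1) * g (m + ((s + 1 : ℕ) : ZMod 12)) := by
    rw [yearValue, Finset.mul_sum]
    refine Finset.sum_congr rfl fun s _ => ?_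
    rw [survival_succ', show m + ((s + 1 : ℕ) : ZMod 12) = m + 1 + (s : ZMod 12) by
      push_cast; ring]
    ring
  have hsplit := (Finset.sum_range_succ
    (fun s : ℕ => β ^ s * survival φ m s * g (m + (s : ZMod 12))) 12).symm.trans
    (Finset.sum_range_succ' _ 12)
  have htwelve : ((12 : ℕ) : ZMod 12) = 0 := ZMod.natCast_self 12
  have hzero : survival φ m 0 = 1 := by simp [survival]
  rw [← hshift, survival_twelve, htwelve, hzero, ← yearValue] at hsplit
  simp only [Nat.cast_zero, add_zero, pow_zero, one_mul] at hsplit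
  linarith

lemma Aslope_mul_add_Dint (β : ℝ) (φ X : ZMod 12 → ℝ) (ε : ℝ) (m : ZMod 12) :
    Aslope β φ m * ε + Dint β φ X m =
      yearValue β φ (fun k => ε + β * ((1 - φ (k + 1)) * X (k + 1))) m /
        (1 - β ^ 12 * Phi φ) := by
  have hD : Dint β φ X m = ∑ s ∈ Finset.range 12, wgt β φ m (s + 1) *
      X (m + ((s + 1 : ℕ) : ZMod 12)) := by
    rw [Dint, Finset.range_eq_Ico, Finset.sum_Ico_add' (fun r : ℕ => wgt β φ m r *
      X (m + (r : ZMod 12)))]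
    rfl
  rw [hD, Aslope, yearValue, Finset.sum_div, Finset.sum_div, Finset.sum_mul,
    ← Finset.sum_add_distrib]
  refine Finset.sum_congr rfl fun s _ => ?_
  rw [wgt, Nat.add_sub_cancel, ← survival, show m + ((s + 1 : ℕ) : ZMod 12) =
    m + (s : ZMod 12) + 1 by push_cast; ring]
  ring

lemma eq_pow_mul_survival_mul {β : ℝ} {φ d : ZMod 12 → ℝ}
    (hd : ∀ m, d m = β * φ (m + 1) * d (m + 1)) (n : ℕ) (m : ZMod 12) :
    d m = β ^ n * survival φ m n * d (m + (n : ZMod 12)) := by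
  induction n generalizing m with
  | zero => simp [survival]
  | succ n ih =>
    rw [hd m, ih (m + 1), survival_succ', show m + ((n + 1 : ℕ) : ZMod 12) =
      m + 1 + (n : ZMod 12) by push_cast; ring]
    ring

theorem stmt3 (β : ℝ) (hβ : 0 < β ∧ β < 1) (φ : ZMod 12 → ℝ)
    (hφ : ∀ m, 0 < φ m ∧ φ m < 1) (X : ZMod 12 → ℝ) (ε : ℝ) :
    (∀ m, Aslope β φ m * ε + Dint β φ X m =
        ε + β * (φ (m + 1) * (Aslope β φ (m + 1) * ε + Dint β φ X (m + 1)) +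
          (1 - φ (m + 1)) * X (m + 1))) ∧
    ∀ h : ZMod 12 → ℝ,
      (∀ m, h m = ε + β * (φ (m + 1) * h (m + 1) + (1 - φ (m + 1)) * X (m + 1))) →
      h = fun m => Aslope β φ m * ε + Dint β φ X m := by
  have hne : 1 - β ^ 12 * Phi φ ≠ 0 := (sub_pos.mpr (pow_mul_Phi_lt_one hβ hφ)).ne'
  have hsol : ∀ m, Aslope β φ m * ε + Dint β φ X m =
      ε + β * (φ (m + 1) * (Aslope β φ (m + 1) * ε + Dint β φ X (m + 1)) +
        (1 - φ (m + 1)) * X (m + 1)) := by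
    intro m
    rw [Aslope_mul_add_Dint, Aslope_mul_add_Dint, yearValue_step, add_div,
      mul_div_cancel_left₀ _ hne]
    ring
  refine ⟨hsol, fun h hh => funext fun m => ?_⟩
  have hd := eq_pow_mul_survival_mul (β := β) (φ := φ)
    (d := fun m => h m - (Aslope β φ m * ε + Dint β φ X m))
    (fun m => by linear_combination hh m - hsol m) 12 m
  have htwelve : ((12 : ℕ) : ZMod 12) = 0 := ZMod.natCast_self 12
  rw [survival_twelve, htwelve, add_zero] at hd
  refine sub_eq_zero.mp ((mul_eq_zero.mp ?_).resolve_left hne)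
  linear_combination hd
end

section
/- (Existence and uniqueness of the housing market equilibrium.) Let β ∈ (0,1), u > 0, and let φ : ZMod 12 → ℝ satisfy 0 < φ_m < 1 for all m. Define Φ = ∏_{j=1}^{12} φ_j, A_m = (Σ_{s=0}^{11} β^s ∏_{j=1}^{s} φ_{m+j}) / (1 − β^{12} Φ), w_{m,r} = β^r (∏_{j=1}^{r−1} φ_{m+j}) (1 − φ_{m+r}) / (1 − β^{12} Φ), φ_max = max_m φ_m, φ_min = min_m φ_m, A_max = max_m A_m, v̲ = 1 − φ_max, v̄ = (1 − φ_min)/(1 − φ_max), X̲ = u/(1 − β), X̄ = u/(1 − β) + A_max v̄/(2(1 − β)), and K = [X̲, X̄]^{12} × [v̲, v̄]^{12}. Define T on K by: D_m = Σ_{r=1}^{12} w_{m,r} X_{m+r}, ε_m = (β X_{m+1} + u − D_m)/A_m, ε̄_m = min(max(ε_m, 0), v_m), ṽ_m = 1 − φ_m + φ_m ε̄_{m−1}, X̃_m = β X_{m+1} + u + (A_m/2)(v_m − ε̄_m)²/v_m, T(X, v) = (X̃, ṽ). Then T has exactly one fixed point in K; equivalently, the 12-periodic housing market equilibrium exists and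 is unique. -/
open Finset

/-- The provisional reservation cutoff `ε_m = (β X_{m+1} + u − D_m)/A_m`. -/
noncomputable def epsProv (β u : ℝ) (φ X : ZMod 12 → ℝ) (m : ZMod 12) : ℝ :=
  (β * X (m + 1) + u - Dint β φ X m) / Aslope β φ m

/-- The clamped reservation cutoff `ε̄_m = min(max(ε_m, 0), v_m)`. -/
noncomputable def epsBar (β u : ℝ) (φ X v : ZMod 12 → ℝ) (m : ZMod 12) : ℝ :=
  min (max (epsProv β u φ X m) 0) (v m)

/-- The updated vacancy stock `ṽ_m = 1 − φ_m + φ_m ε̄_{m−1}`. -/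
noncomputable def vTilde (β u : ℝ) (φ X v : ZMod 12 → ℝ) (m : ZMod 12) : ℝ :=
  1 - φ m + φ m * epsBar β u φ X v (m - 1)

/-- The updated mover value `X̃_m = β X_{m+1} + u + (A_m/2)(v_m − ε̄_m)²/v_m`. -/
noncomputable def XTilde (β u : ℝ) (φ X v : ZMod 12 → ℝ) (m : ZMod 12) : ℝ :=
  β * X (m + 1) + u + Aslope β φ m / 2 * (v m - epsBar β u φ X v m) ^ 2 / v m

/-! ### Cyclic linear inequalities -/

lemma nonpos_of_le_mul_comp {ι : Type*} [Finite ι] (σ : ι → ι) {c d : ι → ℝ}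
    (hc : ∀ m, 0 ≤ c m ∧ c m < 1) (h : ∀ m, d m ≤ c m * d (σ m)) (m : ι) : d m ≤ 0 := by
  have : Nonempty ι := ⟨m⟩
  obtain ⟨k, hk⟩ := Finite.exists_max d
  refine (hk m).trans ?_
  have := h k
  have := mul_le_mul_of_nonneg_left (hk (σ k)) (hc k).1
  nlinarith [hc k]

lemma eq_zero_of_eq_mul_comp {ι : Type*} [Finite ι] (σ : ι → ι) {c d : ι → ℝ}
    (hc : ∀ m, 0 ≤ c m ∧ c m < 1) (h : ∀ m, d m = c m * d (σ m)) (m : ι) : d m = 0 := by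
  refine le_antisymm (nonpos_of_le_mul_comp σ hc (fun m => (h m).le) m) ?_
  have := nonpos_of_le_mul_comp σ (d := fun m => -d m) hc
    (fun m => by have := h m; linarith) m
  linarith

/-! ### Recursions for the slope and the intercept -/

lemma prod_range_shift_succ (φ : ZMod 12 → ℝ) (m : ZMod 12) (s : ℕ) :
    ∏ j ∈ Finset.range (s + 1), φ (m + ((j : ZMod 12) + 1)) =
      φ (m + 1) * ∏ j ∈ Finset.range s, φ (m + 1 + ((j : ZMod 12) + 1)) := by
  rw [Finset.prod_range_succ', mul_comm, Nat.cast_zero, zero_add]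
  congr 1
  refine Finset.prod_congr rfl fun j _ => congrArg φ ?_
  push_cast
  ring

lemma prod_range_twelve_shift (φ : ZMod 12 → ℝ) (m : ZMod 12) :
    ∏ j ∈ Finset.range 12, φ (m + ((j : ZMod 12) + 1)) = Phi φ := by
  have h : Phi φ = ∏ j : ZMod 12, φ (m + (j + 1)) :=
    (Equiv.prod_comp ((Equiv.addRight 1).trans (Equiv.addLeft m)) φ).symm
  rw [h, Finset.prod_range]
  exact Finset.prod_congr rfl fun j _ =>
    congrArg (fun i : ZMod 12 => φ (m + (i + 1))) (ZMod.natCast_zmod_val (n := 12) j)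

lemma Phi_pos_lt_one {φ : ZMod 12 → ℝ} (hφ : ∀ m, 0 < φ m ∧ φ m < 1) :
    0 < Phi φ ∧ Phi φ < 1 := by
  refine ⟨Finset.prod_pos fun m _ => (hφ m).1, ?_⟩
  have h := Finset.prod_lt_prod_of_nonempty (fun m _ => (hφ m).1) (fun m _ => (hφ m).2)
    (Finset.univ_nonempty (α := ZMod 12))
  simpa [Phi] using h

lemma one_sub_pow_mul_Phi_pos {β : ℝ} (hβ : 0 < β ∧ β < 1) {φ : ZMod 12 → ℝ}
    (hφ : ∀ m, 0 < φ m ∧ φ m < 1) : 0 < 1 - β ^ 12 * Phi φ := by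
  have h1 := Phi_pos_lt_one hφ
  have h2 : β ^ 12 < 1 := pow_lt_one₀ hβ.1.le hβ.2 (by norm_num)
  have h3 : 0 < β ^ 12 := pow_pos hβ.1 _
  nlinarith

lemma Aslope_eq {β : ℝ} (hβ : 0 < β ∧ β < 1) {φ : ZMod 12 → ℝ}
    (hφ : ∀ m, 0 < φ m ∧ φ m < 1) (m : ZMod 12) :
    Aslope β φ m = 1 + β * φ (m + 1) * Aslope β φ (m + 1) := by
  have hpos := one_sub_pow_mul_Phi_pos hβ hφ
  unfold Aslope
  rw [mul_div_assoc', eq_comm, ← eq_sub_iff_add_eq', div_eq_iff hpos.ne', sub_mul,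
    div_mul_cancel₀ _ hpos.ne', Finset.sum_range_succ, Finset.sum_range_succ' _ 11,
    ← prod_range_twelve_shift φ m, prod_range_shift_succ φ m 11, mul_add, Finset.mul_sum]
  simp only [prod_range_shift_succ φ m]
  have : ∀ s : ℕ, β ^ (s + 1) * (φ (m + 1) * ∏ j ∈ Finset.range s, φ (m + 1 + ((j : ZMod 12) + 1)))
      = β * φ (m + 1) * (β ^ s * ∏ j ∈ Finset.range s, φ (m + 1 + ((j : ZMod 12) + 1))) :=
    fun s => by ring
  simp only [this]
  simp only [Finset.range_zero, Finset.prod_empty, pow_zero]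
  ring

lemma Aslope_pos {β : ℝ} (hβ : 0 < β ∧ β < 1) {φ : ZMod 12 → ℝ}
    (hφ : ∀ m, 0 < φ m ∧ φ m < 1) (m : ZMod 12) : 0 < Aslope β φ m := by
  refine div_pos (Finset.sum_pos (fun s _ => ?_) (by simp)) (one_sub_pow_mul_Phi_pos hβ hφ)
  exact mul_pos (pow_pos hβ.1 _) (Finset.prod_pos fun j _ => (hφ _).1)

lemma Dint_eq {β : ℝ} (hβ : 0 < β ∧ β < 1) {φ : ZMod 12 → ℝ}
    (hφ : ∀ m, 0 < φ m ∧ φ m < 1) (X : ZMod 12 → ℝ) (m : ZMod 12) :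
    Dint β φ X m =
      β * (1 - φ (m + 1)) * X (m + 1) + β * φ (m + 1) * Dint β φ X (m + 1) := by
  have hpos := one_sub_pow_mul_Phi_pos hβ hφ
  have hD : ∀ k, Dint β φ X k = (∑ r ∈ Finset.range 12,
      β ^ (r + 1) * (∏ j ∈ Finset.range r, φ (k + ((j : ZMod 12) + 1))) *
        ((1 - φ (k + ((r : ZMod 12) + 1))) * X (k + ((r : ZMod 12) + 1)))) /
          (1 - β ^ 12 * Phi φ) := by
    intro k
    rw [Dint, Finset.sum_div, ← Finset.Ico_add_one_right_eq_Icc, Finset.sum_Ico_eq_sum_range]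
    refine Finset.sum_congr rfl fun r _ => ?_
    rw [wgt, Nat.add_comm 1 r, Nat.add_sub_cancel]
    push_cast
    ring
  rw [hD, hD, mul_div_assoc', eq_comm, ← eq_sub_iff_add_eq,
    ← sub_div, eq_div_iff hpos.ne', Finset.sum_range_succ',
    Finset.sum_range_succ _ 11]
  simp only [prod_range_shift_succ φ m]
  have hP := prod_range_twelve_shift φ m
  rw [prod_range_shift_succ φ m 11] at hP
  have h12 : m + 1 + (((11 : ℕ) : ZMod 12) + 1) = m + 1 := by
    have : ((11 : ℕ) : ZMod 12) + 1 = 0 := by decide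
    rw [this, add_zero]
  rw [h12, mul_add, Finset.mul_sum, ← hP]
  have : ∀ r : ℕ, m + (((r + 1 : ℕ) : ZMod 12) + 1) = m + 1 + ((r : ZMod 12) + 1) := by
    intro r
    push_cast
    ring
  simp only [this]
  have : ∀ r : ℕ, β ^ (r + 1 + 1) *
      (φ (m + 1) * ∏ j ∈ Finset.range r, φ (m + 1 + ((j : ZMod 12) + 1))) *
        ((1 - φ (m + 1 + ((r : ZMod 12) + 1))) * X (m + 1 + ((r : ZMod 12) + 1))) =
      β * φ (m + 1) * (β ^ (r + 1) * (∏ j ∈ Finset.range r, φ (m + 1 + ((j : ZMod 12) + 1))) *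
        ((1 - φ (m + 1 + ((r : ZMod 12) + 1))) * X (m + 1 + ((r : ZMod 12) + 1)))) :=
    fun r => by ring
  simp only [this]
  simp only [Finset.range_zero, Finset.prod_empty, Nat.cast_zero, zero_add]
  ring

/-! ### The search value -/

/-- The expected value `e + (v - e)₊² / (2v)` of one draw, uniform on `[0, v]`, with cutoff `e`. -/
noncomputable def searchValue (e v : ℝ) : ℝ := e + max (v - e) 0 ^ 2 / (2 * v)

lemma le_searchValue {v : ℝ} (hv : 0 < v) (e : ℝ) : e ≤ searchValue e v := by
  have : 0 ≤ max (v - e) 0 ^ 2 / (2 * v) := by positivity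
  unfold searchValue
  linarith

lemma searchValue_mono_left {e e' v : ℝ} (he : 0 ≤ e) (h : e ≤ e') (hv : 0 < v) :
    searchValue e v ≤ searchValue e' v := by
  unfold searchValue
  have hb : max (v - e) 0 ≤ v := max_le (by linarith) hv.le
  have hb' : max (v - e') 0 ≤ max (v - e) 0 := max_le_max (by linarith) le_rfl
  have hb0 : 0 ≤ max (v - e') 0 := le_max_right _ _
  have hd : max (v - e) 0 ≤ max (v - e') 0 + (e' - e) :=
    max_le (by linarith [le_max_left (v - e') 0]) (by linarith)
  have : max (v - e) 0 ^ 2 / (2 * v) - max (v - e') 0 ^ 2 / (2 * v) ≤ e' - e := by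
    rw [← sub_div, div_le_iff₀ (by positivity)]
    nlinarith
  linarith

lemma searchValue_mono_right {e v v' : ℝ} (he : 0 ≤ e) (hv : 0 < v) (h : v ≤ v') :
    searchValue e v ≤ searchValue e v' := by
  unfold searchValue
  have hv' : 0 < v' := hv.trans_le h
  refine add_le_add le_rfl ?_
  rcases le_total v e with hle | hle
  · rw [max_eq_right (by linarith)]
    simp only [ne_eq, OfNat.ofNat_ne_zero, not_false_eq_true, zero_pow, zero_div]
    positivity
  · rw [max_eq_left (by linarith), max_eq_left (by linarith),
      div_le_div_iff₀ (by positivity) (by positivity)]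
    have h1 : e * e ≤ v * v' := mul_le_mul hle (hle.trans h) he hv.le
    nlinarith [mul_nonneg (sub_nonneg.2 h) (sub_nonneg.2 h1)]

lemma searchValue_add_le {e v d : ℝ} (hv : 0 < v) (hd : 0 ≤ d) :
    searchValue (e + d) (v + d) ≤ searchValue e v + d := by
  unfold searchValue
  have h1 : v + d - (e + d) = v - e := by ring
  have h2 : max (v - e) 0 ^ 2 / (2 * (v + d)) ≤ max (v - e) 0 ^ 2 / (2 * v) := by
    gcongr
    linarith
  rw [h1]
  linarith

lemma searchValue_le_add {e e' v v' d : ℝ} (he : 0 ≤ e) (hv : 0 < v) (hv' : 0 < v')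
    (h : e ≤ e' + d) (h' : v ≤ v' + d) (hd : 0 ≤ d) :
    searchValue e v ≤ searchValue e' v' + d :=
  ((searchValue_mono_left he h hv).trans
    (searchValue_mono_right (he.trans h) hv h')).trans (searchValue_add_le hv' hd)

lemma abs_searchValue_sub_le {e e' v v' d : ℝ} (he : 0 ≤ e) (he' : 0 ≤ e') (hv : 0 < v)
    (hv' : 0 < v') (h : |e - e'| ≤ d) (h' : |v - v'| ≤ d) :
    |searchValue e v - searchValue e' v'| ≤ d := by
  have hd : 0 ≤ d := (abs_nonneg _).trans h
  rw [abs_le] at h h' ⊢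
  have h1 := searchValue_le_add he hv hv' (e' := e') (d := d) (by linarith) (by linarith) hd
  have h2 := searchValue_le_add he' hv' hv (e' := e) (d := d) (by linarith) (by linarith) hd
  constructor <;> linarith

/-! ### The reduced system in cutoffs and vacancies -/

/-- The equilibrium system for the cutoffs `e` and vacancies `v`, with mover values eliminated. -/
def IsCutoffEquilibrium (β u : ℝ) (φ e v : ZMod 12 → ℝ) : Prop :=
  (∀ m, 0 < e m) ∧ (∀ m, Aslope β φ m * e m =
    u + β * φ (m + 1) * Aslope β φ (m + 1) * searchValue (e (m + 1)) (v (m + 1))) ∧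
  ∀ m, v m = 1 - φ m + φ m * min (e (m - 1)) (v (m - 1))

/-- The map whose fixed points solve the reduced system; its arguments are truncated
to cutoffs `≥ 0` and vacancies `≥ lo`. -/
noncomputable def cutoffMap (β u : ℝ) (φ : ZMod 12 → ℝ) (lo : ℝ)
    (p : (ZMod 12 → ℝ) × (ZMod 12 → ℝ)) : (ZMod 12 → ℝ) × (ZMod 12 → ℝ) :=
  (fun m => (u + β * φ (m + 1) * Aslope β φ (m + 1) *
      searchValue (max (p.1 (m + 1)) 0) (max (p.2 (m + 1)) lo)) / Aslope β φ m,
    fun m => 1 - φ m + φ m * min (max (p.1 (m - 1)) 0) (max (p.2 (m - 1)) lo))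

lemma exists_contractingWith_cutoffMap {β : ℝ} (u : ℝ) (hβ : 0 < β ∧ β < 1)
    {φ : ZMod 12 → ℝ} (hφ : ∀ m, 0 < φ m ∧ φ m < 1) {lo : ℝ} (hlo : 0 < lo) :
    ∃ κ, ContractingWith κ (cutoffMap β u φ lo) := by
  have hA := Aslope_pos hβ hφ
  obtain ⟨k, hk⟩ := Finite.exists_max fun m => max (φ m) (1 - 1 / Aslope β φ m)
  set c := max (φ k) (1 - 1 / Aslope β φ k) with hc
  have hc0 : 0 ≤ c := (hφ k).1.le.trans (le_max_left _ _)
  have hc1 : c < 1 := max_lt (hφ k).2 (by have := hA k; simp [this])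
  refine ⟨⟨c, hc0⟩, hc1, LipschitzWith.of_dist_le_mul fun p q => ?_⟩
  change _ ≤ c * dist p q
  set d := dist p q
  have hd : 0 ≤ d := dist_nonneg
  have h1 : ∀ m, |p.1 m - q.1 m| ≤ d := fun m =>
    (dist_le_pi_dist p.1 q.1 m).trans (le_max_left _ _)
  have h2 : ∀ m, |p.2 m - q.2 m| ≤ d := fun m =>
    (dist_le_pi_dist p.2 q.2 m).trans (le_max_right _ _)
  have h1' : ∀ m, |max (p.1 m) 0 - max (q.1 m) 0| ≤ d := fun m =>
    (abs_max_sub_max_le_abs _ _ _).trans (h1 m)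
  have h2' : ∀ m, |max (p.2 m) lo - max (q.2 m) lo| ≤ d := fun m =>
    (abs_max_sub_max_le_abs _ _ _).trans (h2 m)
  rw [Prod.dist_eq]
  refine max_le ((dist_pi_le_iff (by positivity)).2 fun m => ?_)
    ((dist_pi_le_iff (by positivity)).2 fun m => ?_)
  · have hH := abs_searchValue_sub_le (le_max_right _ _) (le_max_right _ _)
      (hlo.trans_le (le_max_right _ _)) (hlo.trans_le (le_max_right _ _))
      (h1' (m + 1)) (h2' (m + 1))
    have hcm : 1 - 1 / Aslope β φ m ≤ c := (le_max_right _ _).trans (hk m)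
    have hrec : β * φ (m + 1) * Aslope β φ (m + 1) / Aslope β φ m = 1 - 1 / Aslope β φ m := by
      have := Aslope_eq hβ hφ m
      have := hA m
      field_simp
      linarith
    have hnn : 0 ≤ 1 - 1 / Aslope β φ m := by
      rw [← hrec]
      have := hA m
      have := hA (m + 1)
      have := (hφ (m + 1)).1
      have := hβ.1
      positivity
    rw [Real.dist_eq]
    simp only [cutoffMap]
    rw [← sub_div, add_sub_add_left_eq_sub, ← mul_sub, mul_div_right_comm, hrec, abs_mul,
      abs_of_nonneg hnn]
    exact mul_le_mul hcm hH (abs_nonneg _) hc0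
  · have hH := (abs_min_sub_min_le_max (max (p.1 (m - 1)) 0) (max (p.2 (m - 1)) lo)
      (max (q.1 (m - 1)) 0) (max (q.2 (m - 1)) lo)).trans (max_le (h1' _) (h2' _))
    have hcm : φ m ≤ c := (le_max_left _ _).trans (hk m)
    rw [Real.dist_eq]
    simp only [cutoffMap]
    rw [add_sub_add_left_eq_sub, ← mul_sub, abs_mul, abs_of_pos (hφ m).1]
    exact mul_le_mul hcm hH (abs_nonneg _) hc0

lemma IsCutoffEquilibrium.isFixedPt {β u : ℝ} (hβ : 0 < β ∧ β < 1) {φ : ZMod 12 → ℝ}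
    (hφ : ∀ m, 0 < φ m ∧ φ m < 1) {lo : ℝ} {e v : ZMod 12 → ℝ} (hv : ∀ m, lo ≤ v m)
    (h : IsCutoffEquilibrium β u φ e v) :
    Function.IsFixedPt (cutoffMap β u φ lo) (e, v) := by
  obtain ⟨he, h1, h2⟩ := h
  refine Prod.ext (funext fun m => ?_) (funext fun m => ?_)
  · have := (Aslope_pos hβ hφ m).ne'
    simp only [cutoffMap, max_eq_left (he _).le, max_eq_left (hv _), ← h1]
    field_simp
  · simp only [cutoffMap, max_eq_left (he _).le, max_eq_left (hv _), ← h2]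

lemma isCutoffEquilibrium_of_isFixedPt {β u : ℝ} (hβ : 0 < β ∧ β < 1) (hu : 0 < u)
    {φ : ZMod 12 → ℝ} (hφ : ∀ m, 0 < φ m ∧ φ m < 1) {lo : ℝ} (hlo : 0 < lo)
    (hloφ : ∀ m, lo ≤ 1 - φ m) {p : (ZMod 12 → ℝ) × (ZMod 12 → ℝ)}
    (h : Function.IsFixedPt (cutoffMap β u φ lo) p) :
    (∀ m, lo ≤ p.2 m) ∧ IsCutoffEquilibrium β u φ p.1 p.2 := by
  have hA := Aslope_pos hβ hφ
  have h1 := congrFun (congrArg Prod.fst h)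
  have h2 := congrFun (congrArg Prod.snd h)
  simp only [cutoffMap] at h1 h2
  have he : ∀ m, 0 < p.1 m := by
    intro m
    rw [← h1]
    have hv : 0 < max (p.2 (m + 1)) lo := hlo.trans_le (le_max_right _ _)
    have hs := (le_max_right (p.1 (m + 1)) 0).trans (le_searchValue hv _)
    have := hA m
    have := hA (m + 1)
    have := (hφ (m + 1)).1
    have := hβ.1
    positivity
  have hv : ∀ m, lo ≤ p.2 m := by
    intro m
    rw [← h2]
    have : 0 ≤ min (max (p.1 (m - 1)) 0) (max (p.2 (m - 1)) lo) :=
      le_min (le_max_right _ _) (hlo.le.trans (le_max_right _ _))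
    have := mul_nonneg (hφ m).1.le this
    linarith [hloφ m]
  refine ⟨hv, he, fun m => ?_, fun m => ?_⟩
  · have h := h1 m
    rw [max_eq_left (he _).le, max_eq_left (hv _), div_eq_iff (hA m).ne'] at h
    linarith
  · have h := h2 m
    rw [max_eq_left (he _).le, max_eq_left (hv _)] at h
    exact h.symm

/-! ### Passing between mover values and cutoffs -/

lemma epsBar_of_pos {β u : ℝ} {φ X v : ZMod 12 → ℝ} {m : ZMod 12}
    (h : 0 < epsProv β u φ X m) :
    epsBar β u φ X v m = min (epsProv β u φ X m) (v m) := by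
  rw [epsBar, max_eq_left h.le]

lemma sub_min_eq_max (e v : ℝ) : v - min e v = max (v - e) 0 := by
  rcases le_total e v with h | h
  · rw [min_eq_left h, max_eq_left (by linarith)]
  · rw [min_eq_right h, max_eq_right (by linarith), sub_self]

lemma Aslope_mul_epsProv {β : ℝ} (u : ℝ) (hβ : 0 < β ∧ β < 1) {φ : ZMod 12 → ℝ}
    (hφ : ∀ m, 0 < φ m ∧ φ m < 1) (X : ZMod 12 → ℝ) (m : ZMod 12) :
    Aslope β φ m * epsProv β u φ X m = β * X (m + 1) + u - Dint β φ X m := by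
  rw [epsProv, mul_div_cancel₀ _ (Aslope_pos hβ hφ m).ne']

lemma Aslope_mul_epsProv_recursion {β : ℝ} (u : ℝ) (hβ : 0 < β ∧ β < 1) {φ : ZMod 12 → ℝ}
    (hφ : ∀ m, 0 < φ m ∧ φ m < 1) (X : ZMod 12 → ℝ) (m : ZMod 12) :
    Aslope β φ m * epsProv β u φ X m = u + β * φ (m + 1) *
      (Aslope β φ (m + 1) * epsProv β u φ X (m + 1) +
        (X (m + 1) - (β * X (m + 1 + 1) + u))) := by
  rw [Aslope_mul_epsProv u hβ hφ, Aslope_mul_epsProv u hβ hφ, Dint_eq hβ hφ X m]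
  ring

lemma isCutoffEquilibrium_of_fixed {β u : ℝ} (hβ : 0 < β ∧ β < 1) (hu : 0 < u)
    {φ : ZMod 12 → ℝ} (hφ : ∀ m, 0 < φ m ∧ φ m < 1) {X v : ZMod 12 → ℝ}
    (hv : ∀ m, 0 < v m) (hX : ∀ m, XTilde β u φ X v m = X m)
    (hV : ∀ m, vTilde β u φ X v m = v m) :
    IsCutoffEquilibrium β u φ (epsProv β u φ X) v := by
  have hA := Aslope_pos hβ hφ
  have hrec := Aslope_mul_epsProv_recursion u hβ hφ X
  have hc : ∀ m, 0 < β * φ (m + 1) ∧ β * φ (m + 1) < 1 := fun m =>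
    ⟨mul_pos hβ.1 (hφ _).1, mul_lt_one_of_nonneg_of_lt_one_left hβ.1.le hβ.2 (hφ _).2.le⟩
  have hexc : ∀ m, 0 ≤ X m - (β * X (m + 1) + u) := by
    intro m
    have h : 0 ≤ Aslope β φ m / 2 * (v m - epsBar β u φ X v m) ^ 2 / v m := by
      have := hA m
      have := hv m
      positivity
    have := hX m
    rw [XTilde] at this
    linarith
  have hnn : ∀ m, -(Aslope β φ m * epsProv β u φ X m) ≤ 0 := by
    refine nonpos_of_le_mul_comp (· + 1) (c := fun m => β * φ (m + 1))
      (fun m => ⟨(hc m).1.le, (hc m).2⟩) fun m => ?_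
    have := mul_nonneg (hc m).1.le (hexc (m + 1))
    rw [hrec m]
    linarith
  have he : ∀ m, 0 < epsProv β u φ X m := by
    intro m
    refine pos_of_mul_pos_right ?_ (hA m).le
    have := mul_nonneg (hc m).1.le
      (add_nonneg (neg_nonpos.1 (hnn (m + 1))) (hexc (m + 1)))
    rw [hrec m]
    linarith
  refine ⟨he, fun m => ?_, fun m => ?_⟩
  · have h := hX (m + 1)
    rw [XTilde, epsBar_of_pos (he _), sub_min_eq_max] at h
    rw [hrec m, ← eq_sub_iff_add_eq'.2 h, searchValue]
    have := hv (m + 1)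
    field_simp
  · rw [← epsBar_of_pos (he _)]
    exact (hV m).symm

lemma exists_affine_shift_fixed {β : ℝ} (hβ : 0 < β ∧ β < 1) (c : ZMod 12 → ℝ) :
    ∃ X : ZMod 12 → ℝ, ∀ m, X m = β * X (m + 1) + c m := by
  have hf : ContractingWith ⟨β, hβ.1.le⟩
      (fun (X : ZMod 12 → ℝ) m => β * X (m + 1) + c m) := by
    refine ⟨hβ.2, LipschitzWith.of_dist_le_mul fun X Y => ?_⟩
    refine (dist_pi_le_iff (mul_nonneg hβ.1.le dist_nonneg)).2 fun m => ?_
    rw [dist_add_right, Real.dist_eq, ← mul_sub, abs_mul, abs_of_pos hβ.1]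
    exact mul_le_mul_of_nonneg_left (dist_le_pi_dist X Y (m + 1)) hβ.1.le
  exact ⟨_, fun m => (congrFun hf.fixedPoint_isFixedPt m).symm⟩

lemma IsCutoffEquilibrium.exists_fixed {β u : ℝ} (hβ : 0 < β ∧ β < 1)
    {φ : ZMod 12 → ℝ} (hφ : ∀ m, 0 < φ m ∧ φ m < 1) {e v : ZMod 12 → ℝ}
    (hv : ∀ m, 0 < v m) (h : IsCutoffEquilibrium β u φ e v) :
    ∃ X, (∀ m, epsProv β u φ X m = e m) ∧ (∀ m, XTilde β u φ X v m = X m) ∧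
      ∀ m, vTilde β u φ X v m = v m := by
  obtain ⟨he, h1, h2⟩ := h
  have hA := Aslope_pos hβ hφ
  obtain ⟨X, hX⟩ := exists_affine_shift_fixed hβ
    fun m => u + Aslope β φ m / 2 * (max (v m - e m) 0) ^ 2 / v m
  have heq : ∀ m, epsProv β u φ X m = e m := by
    have hz := eq_zero_of_eq_mul_comp (· + 1) (c := fun m => β * φ (m + 1))
      (d := fun m => Aslope β φ m * epsProv β u φ X m - Aslope β φ m * e m)
      (fun m => ⟨(mul_pos hβ.1 (hφ _).1).le,
        mul_lt_one_of_nonneg_of_lt_one_left hβ.1.le hβ.2 (hφ _).2.le⟩) fun m => by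
        have := hv (m + 1)
        have := hX (m + 1)
        rw [Aslope_mul_epsProv_recursion u hβ hφ X m, h1 m, searchValue,
          show X (m + 1) - (β * X (m + 1 + 1) + u) =
            Aslope β φ (m + 1) / 2 * (max (v (m + 1) - e (m + 1)) 0) ^ 2 / v (m + 1) by linarith]
        field_simp
        ring
    intro m
    exact mul_left_cancel₀ (hA m).ne' (sub_eq_zero.1 (hz m))
  have hbar : ∀ m, epsBar β u φ X v m = min (e m) (v m) := fun m => by
    rw [epsBar_of_pos ((heq m).symm ▸ he m), heq]
  refine ⟨X, heq, fun m => ?_, fun m => ?_⟩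
  · rw [XTilde, hbar, sub_min_eq_max]
    linarith [hX m]
  · rw [vTilde, hbar, ← h2]

/-! ### A priori bounds -/

lemma IsCutoffEquilibrium.vacancy_le_one {β u : ℝ} {φ : ZMod 12 → ℝ}
    (hφ : ∀ m, 0 < φ m ∧ φ m < 1) {e v : ZMod 12 → ℝ}
    (h : IsCutoffEquilibrium β u φ e v) (m : ZMod 12) : v m ≤ 1 := by
  have := nonpos_of_le_mul_comp (· - 1) (c := φ) (d := fun m => v m - 1)
    (fun m => ⟨(hφ m).1.le, (hφ m).2⟩) (fun m => by
      have h1 := h.2.2 m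
      have h2 := mul_le_mul_of_nonneg_left (min_le_right (e (m - 1)) (v (m - 1))) (hφ m).1.le
      linarith) m
  linarith

lemma moverValue_bounds {β c X₀ X₁ : ℝ} (hβ : 0 < β ∧ β < 1) {X : ZMod 12 → ℝ} {u : ℝ}
    (hlo : ∀ m, β * X (m + 1) + u ≤ X m) (hhi : ∀ m, X m ≤ β * X (m + 1) + u + c)
    (h₀ : X₀ = u / (1 - β)) (h₁ : X₁ = u / (1 - β) + c / (1 - β)) (m : ZMod 12) :
    X₀ ≤ X m ∧ X m ≤ X₁ := by
  have hb : 0 < 1 - β := by linarith [hβ.2]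
  have hX₀ : X₀ = β * X₀ + u := by
    rw [h₀]
    field_simp
    ring
  have hX₁ : X₁ = β * X₁ + u + c := by
    rw [h₁]
    field_simp
    ring
  constructor
  · have := nonpos_of_le_mul_comp (· + 1) (c := fun _ => β) (d := fun m => X₀ - X m)
      (fun _ => ⟨hβ.1.le, hβ.2⟩) (fun m => by linarith [hlo m]) m
    linarith
  · have := nonpos_of_le_mul_comp (· + 1) (c := fun _ => β) (d := fun m => X m - X₁)
      (fun _ => ⟨hβ.1.le, hβ.2⟩) (fun m => by linarith [hhi m]) m
    linarith

/-- Existence and uniqueness of the 12-periodic housing market equilibrium: the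
equilibrium map `T(X, v) = (X̃, ṽ)` has exactly one fixed point in the box `K`. -/
theorem stmt14 (β u : ℝ) (hβ : 0 < β ∧ β < 1) (hu : 0 < u) (φ : ZMod 12 → ℝ)
    (hφ : ∀ m, 0 < φ m ∧ φ m < 1) :
    let φmax := Finset.univ.sup' Finset.univ_nonempty φ
    let φmin := Finset.univ.inf' Finset.univ_nonempty φ
    let Amax := Finset.univ.sup' Finset.univ_nonempty (Aslope β φ)
    let vlo := 1 - φmax
    let vhi := (1 - φmin) / (1 - φmax)
    let Xlo := u / (1 - β)
    let Xhi := u / (1 - β) + Amax * vhi / (2 * (1 - β))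
    let K : Set ((ZMod 12 → ℝ) × (ZMod 12 → ℝ)) :=
      {p | (∀ m, Xlo ≤ p.1 m ∧ p.1 m ≤ Xhi) ∧ (∀ m, vlo ≤ p.2 m ∧ p.2 m ≤ vhi)}
    ∃! p : (ZMod 12 → ℝ) × (ZMod 12 → ℝ), p ∈ K ∧
      (fun m => XTilde β u φ p.1 p.2 m) = p.1 ∧
      (fun m => vTilde β u φ p.1 p.2 m) = p.2 := by
  intro φmax φmin Amax vlo vhi Xlo Xhi K
  have hA := Aslope_pos hβ hφ
  have hmax : ∀ m, φ m ≤ φmax := fun m => Finset.le_sup' φ (Finset.mem_univ m)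
  have hmin : φmin ≤ φmax := (Finset.inf'_le φ (Finset.mem_univ 0)).trans (hmax 0)
  have hAmax : ∀ m, Aslope β φ m ≤ Amax := fun m =>
    Finset.le_sup' (Aslope β φ) (Finset.mem_univ m)
  have hvlo : 0 < vlo := sub_pos.2 ((Finset.sup'_lt_iff _).2 fun m _ => (hφ m).2)
  have hvhi : 1 ≤ vhi := (one_le_div hvlo).2 (by linarith)
  have hvloφ : ∀ m, vlo ≤ 1 - φ m := fun m => by linarith [hmax m]
  obtain ⟨κ, hκ⟩ := exists_contractingWith_cutoffMap u hβ hφ hvlo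
  refine existsUnique_of_exists_of_unique ?_ ?_
  · obtain ⟨hv, heq⟩ := isCutoffEquilibrium_of_isFixedPt hβ hu hφ hvlo hvloφ
      hκ.fixedPoint_isFixedPt
    set e := (ContractingWith.fixedPoint _ hκ).1
    set v := (ContractingWith.fixedPoint _ hκ).2
    have hvpos : ∀ m, 0 < v m := fun m => hvlo.trans_le (hv m)
    obtain ⟨X, hXe, hX, hV⟩ := heq.exists_fixed hβ hφ hvpos
    refine ⟨(X, v), ⟨?_, fun m => ⟨hv m, (heq.vacancy_le_one hφ m).trans hvhi⟩⟩,
      funext hX, funext hV⟩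
    have hbar : ∀ m, 0 ≤ epsBar β u φ X v m ∧ epsBar β u φ X v m ≤ v m := fun m =>
      ⟨le_min (le_max_right _ _) (hvpos m).le, min_le_right _ _⟩
    refine moverValue_bounds hβ (u := u) (c := Amax * vhi / 2) (fun m => ?_) (fun m => ?_) rfl ?_
    · have h : 0 ≤ Aslope β φ m / 2 * (v m - epsBar β u φ X v m) ^ 2 / v m := by
        have := hA m
        have := hvpos m
        positivity
      have := hX m
      rw [XTilde] at this
      linarith
    · have h : Aslope β φ m / 2 * (v m - epsBar β u φ X v m) ^ 2 / v m ≤ Amax * vhi / 2 := by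
        have h1 : (v m - epsBar β u φ X v m) ^ 2 / v m ≤ vhi := by
          rw [div_le_iff₀ (hvpos m)]
          nlinarith [hbar m, hvpos m, heq.vacancy_le_one hφ m]
        have h2 := mul_le_mul (hAmax m) h1
          (div_nonneg (sq_nonneg _) (hvpos m).le) ((hA m).le.trans (hAmax m))
        rw [mul_div_assoc]
        linarith
      have := hX m
      rw [XTilde] at this
      linarith
    · change u / (1 - β) + Amax * vhi / (2 * (1 - β)) = _
      rw [div_div]
  · rintro ⟨X, v⟩ ⟨X', v'⟩ ⟨⟨-, hv⟩, hX, hV⟩ ⟨⟨-, hv'⟩, hX', hV'⟩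
    have h := isCutoffEquilibrium_of_fixed hβ hu hφ (fun m => hvlo.trans_le (hv m).1)
      (congrFun hX) (congrFun hV)
    have h' := isCutoffEquilibrium_of_fixed hβ hu hφ (fun m => hvlo.trans_le (hv' m).1)
      (congrFun hX') (congrFun hV')
    obtain ⟨he, rfl⟩ := Prod.ext_iff.1 (hκ.fixedPoint_unique'
      (h.isFixedPt hβ hφ fun m => (hv m).1) (h'.isFixedPt hβ hφ fun m => (hv' m).1))
    refine Prod.ext (funext fun m => sub_eq_zero.1 ?_) rfl
    refine eq_zero_of_eq_mul_comp (· + 1) (c := fun _ => β) (d := fun m => X m - X' m)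
      (fun _ => ⟨hβ.1.le, hβ.2⟩) (fun m => ?_) m
    have h1 := congrFun hX m
    have h2 := congrFun hX' m
    have h3 := congrFun he m
    simp only [XTilde, epsBar] at h1 h2 h3
    rw [h3] at h1
    linarith
end
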